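/- Let q ≥ 1 and let u ∈ V_q ∩ V_{q−1}^⊥ with b(u,u) = 1. Then V = span{u} ⊕ (span{u})^⊥ and this decomposition is coordinated with the flag 𝓕. -/

import Mathlib

open Module

/-- The orthogonal complement of a subspace `L` with respect to a bilinear form `b`:
`L^⊥ = {v ∈ V | b(v,w) = 0 for all w ∈ L}`. -/
def perp {K V : Type*} [Field K] [AddCommGroup V] [Module K V]
    (B : V →ₗ[K] V →ₗ[K] K) (L : Submodule K V) : Submodule K V where
  carrier := {v | ∀ w ∈ L, B v w = 0}
  add_mem' := by
    intro a b ha hb w hw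
    simp [map_add, LinearMap.add_apply, ha w hw, hb w hw]
  zero_mem' := by
    intro w hw
    simp
  smul_mem' := by
    intro c a ha w hw
    simp [map_smul, LinearMap.smul_apply, ha w hw]

/-!
A term `V_j` of the flag contains `u` if `j ≥ q`, and lies in `span{u}^⊥` if `j < q`. In the first
case it splits along `span{u} ⊕ span{u}^⊥` by the modular law, in the second case trivially.
-/

theorem eq_inf_sup_inf_of_codisjoint {α : Type*} [Lattice α] [OrderTop α] [IsModularLattice α]
    {l p r : α} (hpr : Codisjoint p r) (hl : p ≤ l ∨ l ≤ r) : l = l ⊓ p ⊔ l ⊓ r := by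
  rcases hl with hpl | hlr
  · calc
      l = (p ⊔ r) ⊓ l := by rw [hpr.eq_top, top_inf_eq]
      _ = p ⊔ r ⊓ l := sup_inf_assoc_of_le r hpl
      _ = l ⊓ p ⊔ l ⊓ r := by rw [inf_eq_right.mpr hpl, inf_comm r l]
  · rw [inf_eq_left.mpr hlr, sup_eq_right.mpr inf_le_left]

section Perp

variable {K V : Type*} [Field K] [AddCommGroup V] [Module K V] {B : V →ₗ[K] V →ₗ[K] K}

theorem perp_eq_orthogonalBilin_flip (L : Submodule K V) : perp B L = L.orthogonalBilin B.flip :=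
  rfl

theorem perp_antitone : Antitone (perp B) :=
  fun _ _ hLM _ hv w hw => hv w (hLM hw)

theorem le_perp_comm (hB : B.IsRefl) {L M : Submodule K V} : L ≤ perp B M ↔ M ≤ perp B L :=
  ⟨fun h w hw v hv => hB v w (h hv w hw), fun h v hv w hw => hB w v (h hw v hv)⟩

theorem isCompl_span_singleton_perp {u : V} (hu : B u u ≠ 0) :
    IsCompl (Submodule.span K {u}) (perp B (Submodule.span K {u})) := by
  rw [perp_eq_orthogonalBilin_flip]
  exact LinearMap.isCompl_span_singleton_orthogonal hu

theorem statement9_general {ι : Type*} [LinearOrder ι] (hB : B.IsRefl) {Vf : ι → Submodule K V}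
    (hmono : Monotone Vf) {q : ι} {u : V} (huq : u ∈ Vf q) (hperp : ∀ j < q, u ∈ perp B (Vf j))
    (huu : B u u ≠ 0) :
    IsCompl (Submodule.span K {u}) (perp B (Submodule.span K {u})) ∧
    ∀ j : ι, Vf j = Vf j ⊓ Submodule.span K {u}
        ⊔ Vf j ⊓ perp B (Submodule.span K {u}) := by
  have hcompl := isCompl_span_singleton_perp huu
  refine ⟨hcompl, fun j => eq_inf_sup_inf_of_codisjoint hcompl.codisjoint ?_⟩
  rcases le_or_gt q j with hqj | hjq
  · exact .inl ((Submodule.span_singleton_le_iff_mem _ _).mpr (hmono hqj huq))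
  · exact .inr ((le_perp_comm hB).mp
      ((Submodule.span_singleton_le_iff_mem _ _).mpr (hperp j hjq)))

end Perp

/-- Lemma 1.2: let q ≥ 1 and u ∈ V_q ∩ V_{q−1}^⊥ with b(u,u) = 1.
Then V = span{u} ⊕ span{u}^⊥ and this decomposition is coordinated with the flag. -/
theorem statement9 {K V : Type*} [Field K] [AddCommGroup V] [Module K V]
    [FiniteDimensional K V] [CharP K 2] [PerfectField K]
    (B : V →ₗ[K] V →ₗ[K] K)
    (hsymm : ∀ u v : V, B u v = B v u)
    (hnd : ∀ v : V, (∀ w : V, B v w = 0) → v = 0)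
    (hna : ∃ v : V, B v v ≠ 0)
    (Vf : ℕ → Submodule K V) (hbot : Vf 0 = ⊥) (hmono : Monotone Vf)
    (htop : ∃ N, ∀ q, N ≤ q → Vf q = ⊤)
    (q : ℕ) (hq : 1 ≤ q)
    (u : V) (hu : u ∈ Vf q ⊓ perp B (Vf (q - 1))) (huu : B u u = 1) :
    IsCompl (Submodule.span K {u}) (perp B (Submodule.span K {u})) ∧
    ∀ j : ℕ, Vf j = Vf j ⊓ Submodule.span K {u}
        ⊔ Vf j ⊓ perp B (Submodule.span K {u}) := by
  exact statement9_general (fun v w h => (hsymm w v).trans h) hmono hu.1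
    (fun _ hjq => perp_antitone (hmono (Nat.le_sub_one_of_lt hjq)) hu.2) (huu ▸ one_ne_zero)
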